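/- Let G be a group, M an abelian group on which G acts by additive automorphisms, and T a nonempty set that is an additive torsor under M (with torsor subtraction −ᵥ : T × T → M and free transitive action +ᵥ : M × T → T), equipped with a G-action such that σ • (m +ᵥ t) = (σ • m) +ᵥ (σ • t) for all σ ∈ G, m ∈ M, t ∈ T. Let n be a positive integer such that the multiplication-by-n map M → M is surjective, and suppose there exist p ∈ T and P ∈ M such that n • (p −ᵥ σ • p) = σ • P − P for all σ ∈ G (i.e. the 1-cocycle σ ↦ p −ᵥ σ • p is killed by n in H¹(G, M)). Then there exists p₀ ∈ T such that n • (p₀ −ᵥ σ • p₀) = 0 for all σ ∈ G; in particular, p₀ −ᵥ σ • p₀ is a torsion element of M for every σ ∈ G. -/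

import Mathlib

theorem vadd_vsub_smul_vadd {G M T : Type*} [AddCommGroup M] [SMul G M] [AddTorsor M T] [SMul G T]
    (hcompat : ∀ (σ : G) (m : M) (t : T), σ • (m +ᵥ t) = (σ • m) +ᵥ (σ • t))
    (σ : G) (m : M) (t : T) :
    (m +ᵥ t) -ᵥ σ • (m +ᵥ t) = (m - σ • m) + (t -ᵥ σ • t) := by
  rw [hcompat, vadd_vsub_vadd_comm]

theorem exists_point_with_torsion_cocycle_general
    {G M N T : Type*} [Monoid G] [AddCommGroup M] [DistribMulAction G M]
    [AddCommGroup N] [DistribMulAction G N] [AddTorsor M T] [SMul G T]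
    (hcompat : ∀ (σ : G) (m : M) (t : T), σ • (m +ᵥ t) = (σ • m) +ᵥ (σ • t))
    (f : M →+[G] N) (p : T) (P : N) (hPf : P ∈ Set.range f)
    (hP : ∀ σ : G, f (p -ᵥ σ • p) = σ • P - P) :
    ∃ p₀ : T, ∀ σ : G, f (p₀ -ᵥ σ • p₀) = 0 := by
  obtain ⟨Q, rfl⟩ := hPf
  -- Translating by `Q` adds the coboundary of `-Q`, which `f` sends to that of `-f Q`.
  refine ⟨Q +ᵥ p, fun σ => ?_⟩
  calc f ((Q +ᵥ p) -ᵥ σ • (Q +ᵥ p))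
      = f ((Q - σ • Q) + (p -ᵥ σ • p)) := by rw [vadd_vsub_smul_vadd hcompat]
    _ = (f Q - σ • f Q) + (σ • f Q - f Q) := by rw [map_add, map_sub, map_smul, hP]
    _ = 0 := by rw [sub_add_sub_cancel, sub_self]

/-- In a compatible `G`-torsor setup (abelian group `M` with a
`G`-action by additive automorphisms, `T` an additive torsor under `M` with a
compatible `G`-action), if multiplication by `n > 0` is surjective on `M` and the
cocycle `σ ↦ p -ᵥ σ • p` is killed by `n` (i.e. `n • (p -ᵥ σ • p) = σ • P - P`
for some `P ∈ M`), then there exists `p₀ ∈ T` with `n • (p₀ -ᵥ σ • p₀) = 0`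
for all `σ ∈ G`; in particular `p₀ -ᵥ σ • p₀` is torsion for every `σ`. -/
theorem exists_point_with_torsion_cocycle
    {G M T : Type*} [Group G] [AddCommGroup M] [DistribMulAction G M]
    [AddTorsor M T] [MulAction G T]
    (hcompat : ∀ (σ : G) (m : M) (t : T), σ • (m +ᵥ t) = (σ • m) +ᵥ (σ • t))
    (n : ℕ) (hn : 0 < n) (hsurj : Function.Surjective fun m : M => n • m)
    (p : T) (P : M) (hP : ∀ σ : G, n • (p -ᵥ σ • p) = σ • P - P) :
    ∃ p₀ : T, ∀ σ : G, n • (p₀ -ᵥ σ • p₀) = 0 :=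
  exists_point_with_torsion_cocycle_general hcompat
    (SMulCommClass.toDistribMulActionHom G M n) p P (hsurj P) hP
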